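/- If p ≡ 3 (mod 4) is prime, then the class number h(-p) of the maximal order Z[(1+√-p)/2] of Q(√-p) is odd. -/

import Mathlib

/-!
Let `K = ℚ(√-p)`. If the class of `I` has order at most two, write `I² = (a)`. Norms from a
totally complex field are nonnegative, so `a` has norm `n²`, and `(a + n)² = (tr a + 2n) a` shows
that `J = (a + n) I⁻¹` (or `J = I` if `a = -n`), which represents the same class, is a square root
of an ideal generated by an integer. After removing a rational factor from `J`, that integer `s`
is squarefree, so each prime factor of `s` ramifies and `s` divides the discriminant. As `p ≡ 3
(mod 4)`, the different contains `√-p`, the derivative of `X² - X + (p + 1) / 4` at its root `(1 +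
√-p) / 2`, hence the discriminant divides the norm `p` of `√-p`. So `s` is `1` or `p`, and `J` is
principal.
-/

open Ideal Module NumberField Polynomial
open scoped nonZeroDivisors

theorem odd_natCard_of_forall_sq_eq_one {G : Type*} [Group G] [Finite G]
    (h : ∀ g : G, g ^ 2 = 1 → g = 1) : Odd (Nat.card G) := by
  rw [← Nat.not_even_iff_odd, even_iff_two_dvd]
  intro hdvd
  obtain ⟨g, hg⟩ := exists_prime_orderOf_dvd_card' 2 hdvd
  have hg_one : g = 1 := h g (hg ▸ pow_orderOf_eq_one g)
  simp [hg_one] at hg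

section QuadraticExtension

variable {R S : Type*} [CommRing R] [StrongRankCondition R] [CommRing S] [Algebra R S]
  [Algebra.IsQuadraticExtension R S]

theorem sq_sub_trace_mul_add_norm_eq_zero (a : S) :
    a ^ 2 - algebraMap R S (Algebra.trace R S a) * a + algebraMap R S (Algebra.norm R a) = 0 := by
  have : Nontrivial R := nontrivial_of_invariantBasisNumber R
  let b := finBasisOfFinrankEq R S (Algebra.IsQuadraticExtension.finrank_eq_two R S)
  have hcharpoly := Matrix.aeval_self_charpoly (Algebra.leftMulMatrix b a)
  rw [Matrix.charpoly_fin_two, ← Algebra.trace_eq_matrix_trace, ← Algebra.norm_eq_matrix_det]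
    at hcharpoly
  apply Algebra.leftMulMatrix_injective b
  simpa using hcharpoly

/-- Hilbert's Theorem 90 made explicit: over the fraction fields `a / n` has norm one, and
`b = n * (1 + a / n)` unless that vanishes. -/
theorem exists_sq_eq_algebraMap_mul_of_norm_eq_sq {a : S} (ha : a ≠ 0) {n : R}
    (hn : Algebra.norm R a = n ^ 2) : ∃ b : S, b ≠ 0 ∧ ∃ m : R, b ^ 2 = algebraMap R S m * a := by
  have hquad := sq_sub_trace_mul_add_norm_eq_zero (R := R) a
  rw [hn, map_pow] at hquad
  by_cases hadd : a + algebraMap R S n = 0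
  · refine ⟨a, ha, -n, ?_⟩
    rw [map_neg]
    linear_combination a * hadd
  · refine ⟨a + algebraMap R S n, hadd, Algebra.trace R S a + 2 * n, ?_⟩
    rw [map_add, map_mul, map_ofNat]
    linear_combination hquad

end QuadraticExtension

section TotallyComplex

variable {K : Type*} [Field K]

theorem isTotallyComplex_of_sq_eq {d : ℚ} (hd : d < 0) {α : K} (hα : α ^ 2 = (d : K)) :
    IsTotallyComplex K := by
  refine ⟨fun v ↦ InfinitePlace.not_isReal_iff_isComplex.mp fun hv ↦ ?_⟩
  have hsq : (InfinitePlace.embedding_of_isReal hv α) ^ 2 = (d : ℝ) := by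
    rw [← map_pow, hα, map_ratCast]
  have hd_real : (d : ℝ) < 0 := mod_cast hd
  linarith [sq_nonneg (InfinitePlace.embedding_of_isReal hv α)]

theorem notMem_range_algebraMap_of_sq_eq [CharZero K] {d : ℚ} (hd : d < 0) {α : K}
    (hα : α ^ 2 = (d : K)) : α ∉ (algebraMap ℚ K).range := by
  rintro ⟨q, rfl⟩
  have hq : q ^ 2 = d := by
    rw [eq_ratCast] at hα
    exact_mod_cast hα
  linarith [sq_nonneg q]

variable [NumberField K] [IsTotallyComplex K]

open scoped Classical in
theorem prod_embeddings_mk_eq_of_isTotallyComplex (w : InfinitePlace K) (x : K) :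
    ∏ φ : K →+* ℂ with InfinitePlace.mk φ = w, φ x = (w x : ℂ) ^ 2 := by
  have hfiber : ({φ | InfinitePlace.mk φ = w} : Finset (K →+* ℂ)) =
      {w.embedding, ComplexEmbedding.conjugate w.embedding} := by
    ext φ
    rw [Finset.mem_filter_univ, eq_comm, ← InfinitePlace.mk_embedding w, InfinitePlace.mk_eq_iff]
    simp [eq_comm]
  have hne : w.embedding ≠ ComplexEmbedding.conjugate w.embedding := fun h ↦
    IsTotallyComplex.complexEmbedding_not_isReal w.embedding
      (ComplexEmbedding.isReal_iff.mpr h.symm)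
  rw [hfiber, Finset.prod_pair hne, ComplexEmbedding.conjugate_coe_eq, Complex.mul_conj',
    InfinitePlace.norm_embedding_eq]

theorem norm_eq_prod_sq_of_isTotallyComplex (x : K) :
    (Algebra.norm ℚ x : ℝ) = ∏ w : InfinitePlace K, w x ^ 2 := by
  classical
  apply Complex.ofReal_injective
  calc ((Algebra.norm ℚ x : ℝ) : ℂ) = ∏ φ : K →ₐ[ℚ] ℂ, φ x := by
        simpa using Algebra.norm_eq_prod_embeddings ℚ ℂ x
    _ = ∏ φ : K →+* ℂ, φ x :=
        (Fintype.prod_equiv (RingHom.equivRatAlgHom K ℂ) _ _ fun _ ↦ rfl).symm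
    _ = ∏ w : InfinitePlace K, ∏ φ : K →+* ℂ with InfinitePlace.mk φ = w, φ x :=
        (Finset.prod_fiberwise _ _ _).symm
    _ = ((∏ w : InfinitePlace K, w x ^ 2 : ℝ) : ℂ) := by
        simp only [prod_embeddings_mk_eq_of_isTotallyComplex, Complex.ofReal_prod,
          Complex.ofReal_pow]

theorem norm_int_nonneg_of_isTotallyComplex (a : 𝓞 K) : 0 ≤ Algebra.norm ℤ a := by
  have hnonneg : (0 : ℝ) ≤ Algebra.norm ℚ (a : K) := by
    rw [norm_eq_prod_sq_of_isTotallyComplex]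
    positivity
  rw [← Algebra.coe_norm_int] at hnonneg
  exact_mod_cast hnonneg

end TotallyComplex

theorem span_intCast_eq_span_natAbs {R : Type*} [CommRing R] (m : ℤ) :
    span {(m : R)} = span {(m.natAbs : R)} := by
  have hmap := congrArg (Ideal.map (Int.castRingHom R)) (Int.span_natAbs m)
  rw [Ideal.map_span, Ideal.map_span, Set.image_singleton, Set.image_singleton] at hmap
  simpa only [eq_intCast, Int.cast_natCast] using hmap.symm

section SquareRoots

variable {K : Type*} [Field K] [NumberField K]

instance isQuadraticExtension_ringOfIntegers [Algebra.IsQuadraticExtension ℚ K] :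
    Algebra.IsQuadraticExtension ℤ (𝓞 K) where
  finrank_eq_two' := by
    rw [RingOfIntegers.rank, Algebra.IsQuadraticExtension.finrank_eq_two ℚ K]

theorem norm_eq_absNorm_sq_of_sq_eq_span [IsTotallyComplex K] {I : Ideal (𝓞 K)} {a : 𝓞 K}
    (hI : I ^ 2 = span {a}) : Algebra.norm ℤ a = (absNorm I : ℤ) ^ 2 := by
  rw [← Int.natAbs_of_nonneg (norm_int_nonneg_of_isTotallyComplex a),
    ← absNorm_span_singleton, ← hI, map_pow, Nat.cast_pow]

theorem exists_sq_eq_span_natCast_of_sq_eq_one [Algebra.IsQuadraticExtension ℚ K]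
    [IsTotallyComplex K] {c : ClassGroup (𝓞 K)} (hc : c ^ 2 = 1) :
    ∃ J : (Ideal (𝓞 K))⁰, ClassGroup.mk0 J = c ∧
      ∃ m : ℕ, (J : Ideal (𝓞 K)) ^ 2 = span {(m : 𝓞 K)} := by
  obtain ⟨I, rfl⟩ := ClassGroup.mk0_surjective c
  have hI_self_inv : ClassGroup.mk0 I = (ClassGroup.mk0 I)⁻¹ :=
    eq_inv_of_mul_eq_one_left (by rw [← sq, hc])
  obtain ⟨a, ha, hIa⟩ := ClassGroup.mk0_eq_mk0_inv_iff.mp hI_self_inv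
  rw [← sq] at hIa
  obtain ⟨b, hb, m, hbm⟩ := exists_sq_eq_algebraMap_mul_of_norm_eq_sq ha
    (norm_eq_absNorm_sq_of_sq_eq_span hIa)
  have hb_sq : span {b} ^ 2 = (I : Ideal (𝓞 K)) ^ 2 * span {(m : 𝓞 K)} := by
    rw [hIa, span_singleton_pow, hbm, span_singleton_mul_span_singleton, mul_comm]
    simp
  obtain ⟨J, hJ⟩ : (I : Ideal (𝓞 K)) ∣ span {b} :=
    (UniqueFactorizationMonoid.pow_dvd_pow_iff_dvd two_ne_zero).mp ⟨_, hb_sq⟩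
  have hJ_ne : J ≠ 0 := by
    rintro rfl
    simp [hb] at hJ
  refine ⟨⟨J, mem_nonZeroDivisors_of_ne_zero hJ_ne⟩, ?_, m.natAbs, ?_⟩
  · rw [hI_self_inv, ClassGroup.mk0_eq_mk0_inv_iff]
    exact ⟨b, hb, by rw [hJ, mul_comm]⟩
  · rw [hJ, mul_pow] at hb_sq
    rw [← span_intCast_eq_span_natAbs]
    exact mul_left_cancel₀ (pow_ne_zero 2 (nonZeroDivisors.ne_zero I.2)) hb_sq

theorem dvd_discr_of_dvd_differentIdeal {q : ℤ} {P : Ideal (𝓞 K)} [P.LiesOver (span {q})]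
    (hP : P ∣ differentIdeal ℤ (𝓞 K)) : q ∣ discr K := by
  have hmem : ((discr K).natAbs : 𝓞 K) ∈ P := by
    rw [← absNorm_differentIdeal K (𝓞 K)]
    exact dvd_iff_le.mp hP (absNorm_mem _)
  rw [← Int.dvd_natAbs, ← mem_span_singleton, mem_of_liesOver P (span {q})]
  simpa using hmem

theorem natCast_dvd_discr_of_sq_eq_span_natCast_mul {q t : ℕ} (hq : q.Prime) (hqt : ¬ q ∣ t)
    {J : Ideal (𝓞 K)} (hJ : J ^ 2 = span {((q * t : ℕ) : 𝓞 K)}) : (q : ℤ) ∣ discr K := by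
  have hq_prime : Prime (q : ℤ) := Nat.prime_iff_prime_int.mp hq
  have hq_max : (span {(q : ℤ)}).IsMaximal :=
    PrincipalIdealRing.isMaximal_of_irreducible hq_prime.irreducible
  obtain ⟨⟨P, hP_prime, hP_over⟩⟩ := nonempty_primesOver (S := 𝓞 K) (span {(q : ℤ)})
  have mem_P_iff (n : ℕ) : (n : 𝓞 K) ∈ P ↔ q ∣ n := by
    rw [← Int.natCast_dvd_natCast, ← mem_span_singleton, mem_of_liesOver P (span {(q : ℤ)})]
    simp
  have hP : Prime P := prime_of_isPrime (ne_bot_of_liesOver_of_ne_bot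
    (by simpa using hq.ne_zero) P (p := span {(q : ℤ)})) hP_prime
  have hJ_mul : J ^ 2 = span {(q : 𝓞 K)} * span {(t : 𝓞 K)} := by
    rw [hJ, span_singleton_mul_span_singleton, Nat.cast_mul]
  have hPJ : P ∣ J := hP.dvd_of_dvd_pow (n := 2) <| by
    rw [hJ, dvd_span_singleton, mem_P_iff]
    exact dvd_mul_right q t
  have hPq : P ^ 2 ∣ span {(q : 𝓞 K)} :=
    hP.pow_dvd_of_dvd_mul_right 2 (by rwa [dvd_span_singleton, mem_P_iff])
      (hJ_mul ▸ pow_dvd_pow_of_dvd hPJ 2)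
  have hP_diff : P ∣ differentIdeal ℤ (𝓞 K) := by
    simpa using pow_sub_one_dvd_differentIdeal ℤ (p := span {(q : ℤ)}) P 2
      (by simpa using hq.ne_zero) (by simpa [map_span] using hPq)
  exact dvd_discr_of_dvd_differentIdeal hP_diff

theorem natCast_dvd_discr_of_sq_eq_span_natCast {s : ℕ} (hs : Squarefree s) {J : Ideal (𝓞 K)}
    (hJ : J ^ 2 = span {(s : 𝓞 K)}) : (s : ℤ) ∣ discr K := by
  rw [Int.natCast_dvd, ← Nat.prod_primeFactors_of_squarefree hs]
  refine Finset.prod_primes_dvd _ (fun q hq ↦ (Nat.prime_of_mem_primeFactors hq).prime) ?_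
  intro q hq
  have hq_prime := Nat.prime_of_mem_primeFactors hq
  obtain ⟨t, rfl⟩ := Nat.dvd_of_mem_primeFactors hq
  have hqt : ¬ q ∣ t :=
    hq_prime.coprime_iff_not_dvd.mp (Nat.coprime_of_squarefree_mul hs)
  rw [← Int.natCast_dvd]
  exact natCast_dvd_discr_of_sq_eq_span_natCast_mul hq_prime hqt hJ

theorem isPrincipal_of_sq_eq_span_natCast {p : ℕ} (hp : p.Prime) (hdiscr : discr K ∣ p)
    {α : 𝓞 K} (hα : α ^ 2 = -(p : 𝓞 K)) {J : Ideal (𝓞 K)} {m : ℕ}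
    (hJ : J ^ 2 = span {(m : 𝓞 K)}) : J.IsPrincipal := by
  rcases eq_or_ne J 0 with rfl | hJ_ne
  · exact bot_isPrincipal
  obtain ⟨s, k, rfl, hs⟩ := Nat.sq_mul_squarefree m
  have hJ_mul : J ^ 2 = span {(k : 𝓞 K)} ^ 2 * span {(s : 𝓞 K)} := by
    rw [hJ, span_singleton_pow, span_singleton_mul_span_singleton, Nat.cast_mul, Nat.cast_pow]
  obtain ⟨J', rfl⟩ : span {(k : 𝓞 K)} ∣ J :=
    (UniqueFactorizationMonoid.pow_dvd_pow_iff_dvd two_ne_zero).mp ⟨_, hJ_mul⟩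
  rw [mul_pow] at hJ_mul
  have hJ' : J' ^ 2 = span {(s : 𝓞 K)} :=
    mul_left_cancel₀ (pow_ne_zero 2 (left_ne_zero_of_mul hJ_ne)) hJ_mul
  have hs_dvd : s ∣ p := by
    exact_mod_cast (natCast_dvd_discr_of_sq_eq_span_natCast hs hJ').trans hdiscr
  obtain ⟨β, hβ⟩ : ∃ β : 𝓞 K, span {β ^ 2} = span {(s : 𝓞 K)} := by
    rcases (Nat.dvd_prime hp).mp hs_dvd with rfl | rfl
    · exact ⟨1, by simp⟩
    · exact ⟨α, by rw [hα, span_singleton_neg]⟩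
  have hJ'_eq : J' = span {β} :=
    pow_left_injective two_ne_zero (by simpa only [span_singleton_pow, hβ] using hJ')
  rw [hJ'_eq, span_singleton_mul_span_singleton]
  exact ⟨⟨_, rfl⟩⟩

end SquareRoots

section Different

variable {K : Type*} [Field K] [NumberField K]

theorem aeval_derivative_mem_differentIdeal_of_aeval_eq_zero {x : 𝓞 K}
    (hx : Algebra.adjoin ℚ {(x : K)} = ⊤) {f : ℤ[X]} (hf : aeval x f = 0) :
    aeval x (derivative f) ∈ differentIdeal ℤ (𝓞 K) := by
  obtain ⟨g, rfl⟩ := minpoly.isIntegrallyClosed_dvd (RingOfIntegers.isIntegral x) hf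
  simp only [derivative_mul, map_add, map_mul, minpoly.aeval, zero_mul, add_zero]
  exact mul_mem_right _ _ (aeval_derivative_mem_differentIdeal ℤ ℚ K x hx)

theorem discr_dvd_norm_of_mem_differentIdeal {a : 𝓞 K} (ha : a ∈ differentIdeal ℤ (𝓞 K)) :
    discr K ∣ Algebra.norm ℤ a := by
  rw [← Int.natAbs_dvd_natAbs, ← absNorm_differentIdeal K (𝓞 K), ← absNorm_span_singleton]
  exact absNorm_dvd_absNorm_of_le ((span_singleton_le_iff_mem _).mpr ha)

theorem exists_eq_two_mul_sub_one {α : 𝓞 K} {c : ℤ} (hα : α ^ 2 = 1 - 4 * (c : 𝓞 K)) :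
    ∃ x : 𝓞 K, α = 2 * x - 1 ∧ x ^ 2 - x + c = 0 := by
  have hα_coe : (α : K) ^ 2 = 1 - 4 * (c : K) := by
    simpa [map_ofNat (algebraMap (𝓞 K) K) 4] using congrArg (algebraMap (𝓞 K) K) hα
  have hroot : ((1 + α) / 2 : K) ^ 2 - (1 + α) / 2 + c = 0 := by
    linear_combination hα_coe / 4
  have hint : IsIntegral ℤ ((1 + α) / 2 : K) :=
    ⟨X ^ 2 - X + C c, by monicity!, by rw [← aeval_def]; simpa using hroot⟩
  obtain ⟨x, hx⟩ : ∃ x : 𝓞 K, (x : K) = (1 + α) / 2 := ⟨⟨_, hint⟩, rfl⟩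
  refine ⟨x, ?_, ?_⟩
  · ext
    simp only [map_sub, map_mul, map_ofNat (algebraMap (𝓞 K) K) 2, map_one, hx]
    ring
  · ext
    simpa [hx] using hroot

variable [Algebra.IsQuadraticExtension ℚ K]

theorem adjoin_eq_top_of_notMem_range {x : K} (hx : x ∉ (algebraMap ℚ K).range) :
    Algebra.adjoin ℚ {x} = ⊤ := by
  have := Subalgebra.isSimpleOrder_of_finrank (Algebra.IsQuadraticExtension.finrank_eq_two ℚ K)
  refine (eq_bot_or_eq_top _).resolve_left fun hbot ↦ hx ?_
  exact Algebra.mem_bot.mp (hbot ▸ Algebra.self_mem_adjoin_singleton ℚ x)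

theorem natAbs_norm_eq_of_sq_eq_neg {n : ℕ} {α : 𝓞 K} (hα : α ^ 2 = -(n : 𝓞 K)) :
    (Algebra.norm ℤ α).natAbs = n := by
  have hsq : Algebra.norm ℤ α ^ 2 = (-(n : ℤ)) ^ 2 := by
    rw [← map_pow, hα, ← Algebra.IsQuadraticExtension.finrank_eq_two ℤ (𝓞 K),
      ← Algebra.norm_algebraMap]
    simp
  simpa using Int.natAbs_eq_iff_sq_eq.mpr hsq

theorem two_mul_add_mem_differentIdeal {x : 𝓞 K} (hx : (x : K) ∉ (algebraMap ℚ K).range)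
    {b c : ℤ} (hroot : x ^ 2 + b * x + c = 0) : 2 * x + b ∈ differentIdeal ℤ (𝓞 K) := by
  have hderiv := aeval_derivative_mem_differentIdeal_of_aeval_eq_zero
    (adjoin_eq_top_of_notMem_range hx) (f := X ^ 2 + C b * X + C c) (by simpa using hroot)
  simpa [map_ofNat (aeval x) 2] using hderiv

theorem mem_differentIdeal_of_sq_eq_one_sub_four_mul {α : 𝓞 K}
    (hα_range : (α : K) ∉ (algebraMap ℚ K).range) {c : ℤ} (hα : α ^ 2 = 1 - 4 * (c : 𝓞 K)) :
    α ∈ differentIdeal ℤ (𝓞 K) := by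
  obtain ⟨x, rfl, hroot⟩ := exists_eq_two_mul_sub_one hα
  have hx_range : (x : K) ∉ (algebraMap ℚ K).range := fun ⟨q, hq⟩ ↦
    hα_range ⟨2 * q - 1, by simp [← hq, map_ofNat (algebraMap (𝓞 K) K) 2]⟩
  simpa [sub_eq_add_neg] using two_mul_add_mem_differentIdeal hx_range (b := -1) (c := c)
    (by linear_combination hroot)

theorem discr_dvd_of_sq_eq_neg {n : ℕ} (hn : n % 4 = 3) {α : 𝓞 K} (hα : α ^ 2 = -(n : 𝓞 K)) :
    discr K ∣ n := by
  have hα_range : (α : K) ∉ (algebraMap ℚ K).range :=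
    notMem_range_algebraMap_of_sq_eq (d := -n) (by rw [neg_lt_zero, Nat.cast_pos]; lia)
      (by simpa using congrArg (algebraMap (𝓞 K) K) hα)
  obtain ⟨c, hc⟩ : ∃ c : ℕ, n + 1 = 4 * c := ⟨(n + 1) / 4, by lia⟩
  have hα_sq : α ^ 2 = 1 - 4 * ((c : ℤ) : 𝓞 K) := by
    have hc_cast : (n : 𝓞 K) + 1 = 4 * c := mod_cast hc
    rw [Int.cast_natCast]
    linear_combination hα - hc_cast
  rw [← natAbs_norm_eq_of_sq_eq_neg hα, Int.dvd_natAbs]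
  exact discr_dvd_norm_of_mem_differentIdeal
    (mem_differentIdeal_of_sq_eq_one_sub_four_mul hα_range hα_sq)

end Different

theorem odd_classNumber_of_discr_dvd {K : Type*} [Field K] [NumberField K]
    [Algebra.IsQuadraticExtension ℚ K] {p : ℕ} (hp : p.Prime)
    (hdiscr : discr K ∣ p) {α : 𝓞 K} (hα : α ^ 2 = -(p : 𝓞 K)) : Odd (classNumber K) := by
  have : IsTotallyComplex K :=
    isTotallyComplex_of_sq_eq (d := -p) (neg_lt_zero.mpr (mod_cast hp.pos))
      (by simpa using congrArg (algebraMap (𝓞 K) K) hα)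
  rw [classNumber, ← Nat.card_eq_fintype_card]
  refine odd_natCard_of_forall_sq_eq_one fun c hc ↦ ?_
  obtain ⟨J, rfl, m, hJ⟩ := exists_sq_eq_span_natCast_of_sq_eq_one hc
  rw [ClassGroup.mk0_eq_one_iff]
  exact isPrincipal_of_sq_eq_span_natCast hp hdiscr hα hJ

/-- If `p ≡ 3 (mod 4)` is prime, then the class number of `ℚ(√-p)` is odd. -/
theorem stmt_0 (p : ℕ) (hp : p.Prime) (hmod : p % 4 = 3)
    (K : Type*) [Field K] [NumberField K]
    (α : K) (hα : α ^ 2 = -(p : K))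
    (hdeg : Module.finrank ℚ K = 2) :
    Odd (NumberField.classNumber K) := by
  have : Algebra.IsQuadraticExtension ℚ K := ⟨hdeg⟩
  have hα_int : IsIntegral ℤ α := .of_pow two_pos (hα ▸ (isIntegral_natCast p).neg)
  obtain ⟨β, rfl⟩ : ∃ β : 𝓞 K, (β : K) = α := ⟨⟨α, hα_int⟩, rfl⟩
  have hβ : β ^ 2 = -(p : 𝓞 K) := by
    ext
    simpa using hα
  exact odd_classNumber_of_discr_dvd hp
    (discr_dvd_of_sq_eq_neg hmod hβ) hβ
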